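/- Let F be a finite field with q elements and let B₁,…,B_k ∈ F^{m×n} be a linearly independent family of matrices generating a matrix rank-metric code C = span_F{B₁,…,B_k} that is column-nondegenerate and row-nondegenerate and faithful (every nonzero element of the associated column-system S has rank m); note that faithfulness forces k ≥ max{m,n}. Then, as integers, (q − 1) · |{M ∈ C : rank(M) = min{m,n}}| ≥ q(q^k − 1) − (q^{k−max{m,n}} − 1)(q^{min{m,n}} − 1) − (q^k − 1). -/

import Mathlib

open Matrix

section Defs

variable {K : Type*} [Field K]

/-- The row space of a matrix: the span of its rows in `K^b`. -/
noncomputable def rowSpace {a b : ℕ} (M : Matrix (Fin a) (Fin b) K) :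
    Submodule K (Fin b → K) :=
  Submodule.span K (Set.range fun i => M i)

/-- The column space of a matrix: the span of its columns in `K^a`. -/
noncomputable def colSpace {a b : ℕ} (M : Matrix (Fin a) (Fin b) K) :
    Submodule K (Fin a → K) :=
  Submodule.span K (Set.range fun j i => M i j)

/-- `Sc S U = {X ∈ S : colsp(X) ⊆ U}`, a subspace of the matrix space. -/
noncomputable def Sc {a b : ℕ} (S : Submodule K (Matrix (Fin a) (Fin b) K))
    (U : Submodule K (Fin a → K)) : Submodule K (Matrix (Fin a) (Fin b) K) where
  carrier := {X | X ∈ S ∧ colSpace X ≤ U}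
  add_mem' := by
    rintro X Y ⟨hXS, hXU⟩ ⟨hYS, hYU⟩
    refine ⟨S.add_mem hXS hYS, ?_⟩
    rw [colSpace, Submodule.span_le]
    rintro v ⟨j, rfl⟩
    have hx : (fun i => X i j) ∈ U := hXU (Submodule.subset_span ⟨j, rfl⟩)
    have hy : (fun i => Y i j) ∈ U := hYU (Submodule.subset_span ⟨j, rfl⟩)
    exact U.add_mem hx hy
  zero_mem' := by
    refine ⟨S.zero_mem, ?_⟩
    rw [colSpace, Submodule.span_le]
    rintro v ⟨j, rfl⟩
    exact U.zero_mem
  smul_mem' := by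
    rintro c X ⟨hXS, hXU⟩
    refine ⟨S.smul_mem c hXS, ?_⟩
    rw [colSpace, Submodule.span_le]
    rintro v ⟨j, rfl⟩
    exact U.smul_mem c (hXU (Submodule.subset_span ⟨j, rfl⟩))

/-- `Sr S U = {X ∈ S : rowsp(X) ⊆ U}`, a subspace of the matrix space. -/
noncomputable def Sr {a b : ℕ} (S : Submodule K (Matrix (Fin a) (Fin b) K))
    (U : Submodule K (Fin b → K)) : Submodule K (Matrix (Fin a) (Fin b) K) where
  carrier := {X | X ∈ S ∧ rowSpace X ≤ U}
  add_mem' := by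
    rintro X Y ⟨hXS, hXU⟩ ⟨hYS, hYU⟩
    refine ⟨S.add_mem hXS hYS, ?_⟩
    rw [rowSpace, Submodule.span_le]
    rintro v ⟨i, rfl⟩
    have hx : X i ∈ U := hXU (Submodule.subset_span ⟨i, rfl⟩)
    have hy : Y i ∈ U := hYU (Submodule.subset_span ⟨i, rfl⟩)
    exact U.add_mem hx hy
  zero_mem' := by
    refine ⟨S.zero_mem, ?_⟩
    rw [rowSpace, Submodule.span_le]
    rintro v ⟨i, rfl⟩
    exact U.zero_mem
  smul_mem' := by
    rintro c X ⟨hXS, hXU⟩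
    refine ⟨S.smul_mem c hXS, ?_⟩
    rw [rowSpace, Submodule.span_le]
    rintro v ⟨i, rfl⟩
    exact U.smul_mem c (hXU (Submodule.subset_span ⟨i, rfl⟩))

/-- Row support of a set of matrices: the sum of the row spaces of its elements. -/
noncomputable def rowSupport {a b : ℕ} (D : Submodule K (Matrix (Fin a) (Fin b) K)) :
    Submodule K (Fin b → K) :=
  ⨆ M ∈ D, rowSpace M

/-- Column support of a set of matrices: the sum of the column spaces of its elements. -/
noncomputable def colSupport {a b : ℕ} (D : Submodule K (Matrix (Fin a) (Fin b) K)) :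
    Submodule K (Fin a → K) :=
  ⨆ M ∈ D, colSpace M

/-- The hyperplane `u^⊥ = {v : ∑ i, u i * v i = 0}`. -/
noncomputable def perp {a : ℕ} (u : Fin a → K) : Submodule K (Fin a → K) where
  carrier := {v | ∑ i, u i * v i = 0}
  add_mem' := by
    intro v w hv hw
    simp only [Set.mem_setOf_eq, Pi.add_apply, mul_add, Finset.sum_add_distrib] at *
    simp [hv, hw]
  zero_mem' := by simp
  smul_mem' := by
    intro c v hv
    simp only [Set.mem_setOf_eq, Pi.smul_apply, smul_eq_mul] at *
    have : ∑ i, u i * (c * v i) = c * ∑ i, u i * v i := by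
      rw [Finset.mul_sum]; congr 1; ext i; ring
    simp [this, hv]

/-- The orthogonal complement `U^⊥ = {v : ∀ u ∈ U, ∑ i, u i * v i = 0}`. -/
noncomputable def perpSub {a : ℕ} (U : Submodule K (Fin a → K)) : Submodule K (Fin a → K) :=
  ⨅ u ∈ U, perp u

/-- The slices of the column-system: `(X l) i j = (B i) j l`. -/
def colSlices {m n k : ℕ} (B : Fin k → Matrix (Fin m) (Fin n) K) :
    Fin n → Matrix (Fin k) (Fin m) K :=
  fun l => Matrix.of fun i j => B i j l

/-- The slices of the row-system: `(Y j) l i = (B i) j l`. -/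
def rowSlices {m n k : ℕ} (B : Fin k → Matrix (Fin m) (Fin n) K) :
    Fin m → Matrix (Fin n) (Fin k) K :=
  fun j => Matrix.of fun l i => B i j l

/-- The linear map `u ↦ ∑ i, u i • B i` (i.e. `u ↦ m₁(T,u)`). -/
noncomputable def combMap {m n k : ℕ} (B : Fin k → Matrix (Fin m) (Fin n) K) :
    (Fin k → K) →ₗ[K] Matrix (Fin m) (Fin n) K where
  toFun u := ∑ i, u i • B i
  map_add' := by intro u v; simp [add_smul, Finset.sum_add_distrib]
  map_smul' := by intro c u; simp [smul_smul, Finset.smul_sum]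

/-- The `t`-th row-generalized rank weight. -/
noncomputable def dRow {a b : ℕ} (C : Submodule K (Matrix (Fin a) (Fin b) K)) (t : ℕ) : ℕ :=
  sInf {r | ∃ D : Submodule K (Matrix (Fin a) (Fin b) K),
    D ≤ C ∧ Module.finrank K D = t ∧ Module.finrank K (rowSupport D) = r}

/-- The `t`-th column-generalized rank weight. -/
noncomputable def dCol {a b : ℕ} (C : Submodule K (Matrix (Fin a) (Fin b) K)) (t : ℕ) : ℕ :=
  sInf {r | ∃ D : Submodule K (Matrix (Fin a) (Fin b) K),
    D ≤ C ∧ Module.finrank K D = t ∧ Module.finrank K (colSupport D) = r}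

end Defs

/-!
Count the pairs `(M, v)` of a nonzero matrix `M ∈ C` without full column rank and a nonzero vector
`v` with `M *ᵥ v = 0`. Each such `M` lies in at least `q - 1` of these pairs. Faithfulness together
with column-nondegeneracy says that no form `M ↦ w ⬝ᵥ M *ᵥ v` with `v, w ≠ 0` vanishes on `C`, so
evaluation at `v ≠ 0` maps `C` onto `F^m` and each `v` lies in at most `q^(k - m) - 1` pairs. This
bounds the number of matrices without full column rank. The condition on the forms is symmetric in
rows and columns, so the same count with `w ᵥ* M = 0` settles the case `m ≤ n`.
-/

section DoubleCounting

variable {F E V W : Type*} [Field F] [AddCommGroup E] [Module F E] [AddCommGroup V] [Module F V]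
  [AddCommGroup W] [Module F W]

theorem ncard_submodule_sdiff_zero [Module.Finite F V] (p : Submodule F V) :
    ((p : Set V) \ {0}).ncard = Nat.card F ^ Module.finrank F p - 1 := by
  rw [Set.ncard_sdiff_singleton_of_mem p.zero_mem, ← Module.natCard_eq_pow_finrank]
  rfl

theorem card_sub_one_le_ncard_sdiff_zero [Finite F] [Module.Finite F V] {p : Submodule F V}
    (hp : p ≠ ⊥) : Nat.card F - 1 ≤ ((p : Set V) \ {0}).ncard := by
  rw [ncard_submodule_sdiff_zero]
  exact Nat.sub_le_sub_right (Nat.le_self_pow (Submodule.finrank_eq_zero.not.mpr hp) _) 1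

theorem ncard_ker_sdiff_zero_of_surjective [Module.Finite F V] {f : V →ₗ[F] W}
    (hf : Function.Surjective f) :
    ((f.ker : Set V) \ {0}).ncard =
      Nat.card F ^ (Module.finrank F V - Module.finrank F W) - 1 := by
  rw [ncard_submodule_sdiff_zero, ← f.finrank_range_add_finrank_ker,
    LinearMap.range_eq_top.mpr hf, finrank_top, Nat.add_sub_cancel_left]

variable [Finite F] [Module.Finite F E] [Module.Finite F V]

theorem ncard_not_injective_mul_le (f : E →ₗ[F] V →ₗ[F] W)
    (hf : ∀ v ≠ 0, Function.Surjective (f.flip v)) :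
    {x | x ≠ 0 ∧ ¬ Function.Injective (f x)}.ncard * (Nat.card F - 1) ≤
      (Nat.card F ^ Module.finrank F V - 1) *
        (Nat.card F ^ (Module.finrank F E - Module.finrank F W) - 1) := by
  classical
  have : Finite E := Module.finite_of_finite F
  have : Finite V := Module.finite_of_finite F
  have : Fintype E := Fintype.ofFinite E
  have : Fintype V := Fintype.ofFinite V
  let noninjective : Finset E := {x | x ≠ 0 ∧ ¬ Function.Injective (f x)}
  let nonzero : Finset V := Finset.univ.erase 0
  let annihilates (x : E) (v : V) : Prop := f x v = 0
  have card_above : ∀ x ∈ noninjective,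
      Nat.card F - 1 ≤ (nonzero.bipartiteAbove annihilates x).card := by
    intro x hx
    have hker : (f x).ker ≠ ⊥ := fun h => (Finset.mem_filter.mp hx).2.2 (LinearMap.ker_eq_bot.mp h)
    have hset : (nonzero.bipartiteAbove annihilates x : Set V) = ((f x).ker : Set V) \ {0} := by
      ext v
      simp [nonzero, annihilates, Finset.bipartiteAbove, and_comm]
    rw [← Set.ncard_coe_finset, hset]
    exact card_sub_one_le_ncard_sdiff_zero hker
  have card_below : ∀ v ∈ nonzero, (noninjective.bipartiteBelow annihilates v).card ≤
      Nat.card F ^ (Module.finrank F E - Module.finrank F W) - 1 := by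
    intro v hv
    rw [← ncard_ker_sdiff_zero_of_surjective (hf v (Finset.ne_of_mem_erase hv)),
      ← Set.ncard_coe_finset]
    refine Set.ncard_le_ncard fun x hx => ?_
    obtain ⟨hx, hxv⟩ := Finset.mem_filter.mp hx
    exact ⟨hxv, (Finset.mem_filter.mp hx).2.1⟩
  have card_nonzero : nonzero.card = Nat.card F ^ Module.finrank F V - 1 := by
    rw [Finset.card_erase_of_mem (Finset.mem_univ 0), Finset.card_univ,
      ← Nat.card_eq_fintype_card, Module.natCard_eq_pow_finrank (K := F)]
  rw [← card_nonzero, Set.ncard_eq_toFinset_card', Set.toFinset_ofPred]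
  exact Finset.card_mul_le_card_mul annihilates card_above card_below

theorem mul_card_injective_ge (f : E →ₗ[F] V →ₗ[F] W)
    (hf : ∀ v ≠ 0, Function.Surjective (f.flip v)) :
    ((Nat.card F : ℤ) - 1) * Nat.card {x // Function.Injective (f x)} ≥
      ((Nat.card F : ℤ) - 1) * ((Nat.card F : ℤ) ^ Module.finrank F E - 1) -
        ((Nat.card F : ℤ) ^ Module.finrank F V - 1) *
          ((Nat.card F : ℤ) ^ (Module.finrank F E - Module.finrank F W) - 1) := by
  have : Finite E := Module.finite_of_finite F
  have hcover : Nat.card F ^ Module.finrank F E - 1 ≤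
      {x | x ≠ 0 ∧ ¬ Function.Injective (f x)}.ncard +
        Nat.card {x // Function.Injective (f x)} := by
    rw [← finrank_top, ← ncard_submodule_sdiff_zero]
    refine (Set.ncard_le_ncard fun x hx => ?_).trans (Set.ncard_union_le _ _)
    by_cases hinj : Function.Injective (f x)
    exacts [.inr hinj, .inl ⟨hx.2, hinj⟩]
  have hnoninj := ncard_not_injective_mul_le f hf
  have hpow (d : ℕ) : 1 ≤ Nat.card F ^ d := Nat.one_le_pow _ _ Nat.card_pos
  zify [hpow, Nat.card_pos (α := F)] at hcover hnoninj
  have hq : (0 : ℤ) ≤ Nat.card F - 1 := by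
    linarith [show (1 : ℤ) ≤ Nat.card F from mod_cast Nat.card_pos (α := F)]
  linarith [mul_le_mul_of_nonneg_left hcover hq]

end DoubleCounting

section MatrixCodes

variable {K m n : Type*} [Field K] [Fintype n]

theorem rank_eq_card_cols_iff_mulVec_injective (M : Matrix m n K) :
    M.rank = Fintype.card n ↔ Function.Injective M.mulVec := by
  rw [Matrix.mulVec_injective_iff, linearIndependent_iff_card_eq_finrank_span,
    Matrix.rank_eq_finrank_span_cols, eq_comm]
  rfl

variable [Fintype m]

theorem rank_eq_card_rows_iff_vecMul_injective (M : Matrix m n K) :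
    M.rank = Fintype.card m ↔ Function.Injective M.vecMul := by
  rw [← Matrix.rank_transpose, rank_eq_card_cols_iff_mulVec_injective,
    show Mᵀ.mulVec = M.vecMul from funext M.mulVec_transpose]

theorem surjective_of_forall_exists_dotProduct_ne_zero {E : Type*} [AddCommGroup E] [Module K E]
    (f : E →ₗ[K] m → K) (hf : ∀ w ≠ 0, ∃ x, w ⬝ᵥ f x ≠ 0) : Function.Surjective f := by
  classical
  by_contra hsurj
  obtain ⟨φ, hφ, hle⟩ := f.range.exists_le_ker_of_lt_top
    (lt_top_iff_ne_top.mpr (LinearMap.range_eq_top.not.mpr hsurj))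
  obtain ⟨w, rfl⟩ := (dotProductEquiv K m).surjective φ
  obtain ⟨x, hx⟩ := hf w fun hw => hφ (by rw [hw, map_zero])
  exact hx (hle ⟨x, rfl⟩)

/-- A space of matrices `C` *separates pairs* if no form `M ↦ w ⬝ᵥ M *ᵥ v` with `v, w ≠ 0` vanishes
on `C`, equivalently, if the trace dual of `C` contains no matrix of rank one. For a
column-nondegenerate code this is faithfulness, stated without reference to a basis of `C` and
symmetrically in rows and columns. -/
def SeparatesPairs (C : Submodule K (Matrix m n K)) : Prop :=
  ∀ v ≠ 0, ∀ w ≠ 0, ∃ M ∈ C, w ⬝ᵥ M *ᵥ v ≠ 0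

namespace SeparatesPairs

variable {C : Submodule K (Matrix m n K)}

theorem mulVec_surjective (hC : SeparatesPairs C) {v : n → K} (hv : v ≠ 0) :
    Function.Surjective fun M : C => M.1 *ᵥ v :=
  surjective_of_forall_exists_dotProduct_ne_zero
    ((Matrix.mulVecBilin K K ∘ₗ C.subtype).flip v) fun w hw =>
      let ⟨M, hM, hne⟩ := hC v hv w hw
      ⟨⟨M, hM⟩, hne⟩

theorem vecMul_surjective (hC : SeparatesPairs C) {w : m → K} (hw : w ≠ 0) :
    Function.Surjective fun M : C => w ᵥ* M.1 :=
  surjective_of_forall_exists_dotProduct_ne_zero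
    (Matrix.vecMulBilin K K w ∘ₗ C.subtype) fun v hv =>
      let ⟨M, hM, hne⟩ := hC v hv w hw
      ⟨⟨M, hM⟩, by
        rwa [dotProduct_comm, LinearMap.comp_apply, Submodule.subtype_apply,
          Matrix.vecMulBilin_apply, ← Matrix.dotProduct_mulVec]⟩

variable [Finite K]

theorem mul_card_rank_eq_card_cols_ge (hC : SeparatesPairs C) :
    ((Nat.card K : ℤ) - 1) * Nat.card {M // M ∈ C ∧ M.rank = Fintype.card n} ≥
      ((Nat.card K : ℤ) - 1) * ((Nat.card K : ℤ) ^ Module.finrank K C - 1) -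
        ((Nat.card K : ℤ) ^ Fintype.card n - 1) *
          ((Nat.card K : ℤ) ^ (Module.finrank K C - Fintype.card m) - 1) := by
  let f : C →ₗ[K] (n → K) →ₗ[K] (m → K) := Matrix.mulVecBilin K K ∘ₗ C.subtype
  have hcount := mul_card_injective_ge f fun v hv => hC.mulVec_surjective hv
  simp only [rank_eq_card_cols_iff_mulVec_injective]
  rw [Module.finrank_fintype_fun_eq_card, Module.finrank_fintype_fun_eq_card] at hcount
  rwa [← Nat.card_congr (Equiv.subtypeSubtypeEquivSubtypeInter (· ∈ C) _)]

theorem mul_card_rank_eq_card_rows_ge (hC : SeparatesPairs C) :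
    ((Nat.card K : ℤ) - 1) * Nat.card {M // M ∈ C ∧ M.rank = Fintype.card m} ≥
      ((Nat.card K : ℤ) - 1) * ((Nat.card K : ℤ) ^ Module.finrank K C - 1) -
        ((Nat.card K : ℤ) ^ Fintype.card m - 1) *
          ((Nat.card K : ℤ) ^ (Module.finrank K C - Fintype.card n) - 1) := by
  let f : C →ₗ[K] (m → K) →ₗ[K] (n → K) := (Matrix.vecMulBilin K K).flip ∘ₗ C.subtype
  have hcount := mul_card_injective_ge f fun w hw => hC.vecMul_surjective hw
  simp only [rank_eq_card_rows_iff_vecMul_injective]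
  rw [Module.finrank_fintype_fun_eq_card, Module.finrank_fintype_fun_eq_card] at hcount
  rwa [← Nat.card_congr (Equiv.subtypeSubtypeEquivSubtypeInter (· ∈ C) _)]

end SeparatesPairs

end MatrixCodes

section Faithful

variable {K : Type*} [Field K] {m n k : ℕ}

theorem perp_eq_top_iff {v : Fin n → K} : perp v = ⊤ ↔ v = 0 :=
  Submodule.eq_top_iff'.trans dotProduct_eq_zero_iff

theorem rowSpace_le_perp_iff {M : Matrix (Fin m) (Fin n) K} {v : Fin n → K} :
    rowSpace M ≤ perp v ↔ M *ᵥ v = 0 := by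
  rw [rowSpace, Submodule.span_le, Set.range_subset_iff, funext_iff]
  exact forall_congr' fun i => by rw [Matrix.mulVec, dotProduct_comm]; rfl

theorem eq_zero_of_rowSupport_eq_top {C : Submodule K (Matrix (Fin m) (Fin n) K)}
    (hC : rowSupport C = ⊤) {v : Fin n → K} (hv : ∀ M ∈ C, M *ᵥ v = 0) : v = 0 :=
  perp_eq_top_iff.mp <| top_le_iff.mp <|
    hC.symm.trans_le (iSup₂_le fun M hM => rowSpace_le_perp_iff.mpr (hv M hM))

theorem sum_smul_colSlices (B : Fin k → Matrix (Fin m) (Fin n) K) (v : Fin n → K) :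
    ∑ l, v l • colSlices B l = Matrix.of fun i => B i *ᵥ v := by
  ext i j
  simp [Matrix.sum_apply, colSlices, Matrix.mulVec, dotProduct, mul_comm]

theorem separatesPairs_of_faithful {B : Fin k → Matrix (Fin m) (Fin n) K}
    (hcolnd : rowSupport (Submodule.span K (Set.range B)) = ⊤)
    (hfaithful : ∀ X ∈ Submodule.span K (Set.range (colSlices B)), X ≠ 0 → X.rank = m) :
    SeparatesPairs (Submodule.span K (Set.range B)) := by
  intro v hv w hw
  by_contra! hvanish
  let X : Matrix (Fin k) (Fin m) K := Matrix.of fun i => B i *ᵥ v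
  have hXw : X *ᵥ w = 0 := funext fun i =>
    (dotProduct_comm _ _).trans (hvanish (B i) (Submodule.subset_span ⟨i, rfl⟩))
  have hXS : X ∈ Submodule.span K (Set.range (colSlices B)) := by
    rw [show X = ∑ l, v l • colSlices B l from (sum_smul_colSlices B v).symm]
    exact Submodule.sum_smul_mem _ _ fun l _ => Submodule.subset_span ⟨l, rfl⟩
  have hX0 : X = 0 := by
    by_contra hX
    have hinj : Function.Injective X.mulVec := by
      rw [← rank_eq_card_cols_iff_mulVec_injective, hfaithful X hXS hX, Fintype.card_fin]
    exact hw (hinj (hXw.trans (Matrix.mulVec_zero X).symm))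
  have hann : Submodule.span K (Set.range B) ≤ ((Matrix.mulVecBilin K K).flip v).ker := by
    rw [Submodule.span_le, Set.range_subset_iff]
    exact fun i => congrFun hX0 i
  exact hv (eq_zero_of_rowSupport_eq_top hcolnd fun M hM => hann hM)

end Faithful

/-- For a faithful (column- and row-nondegenerate) `[m×n,k]_q` code `C`,
`(q−1)·|{M ∈ C : rk(M) = min{m,n}}| ≥ q(q^k−1) − (q^{k−max{m,n}}−1)(q^{min{m,n}}−1) − (q^k−1)`. -/
theorem stmt12 {F : Type*} [Field F] [Fintype F] {m n k : ℕ}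
    (hm : 0 < m) (hn : 0 < n) (hk : max m n ≤ k)
    (q : ℕ) (hq : q = Fintype.card F)
    (B : Fin k → Matrix (Fin m) (Fin n) F) (hB : LinearIndependent F B)
    (C : Submodule F (Matrix (Fin m) (Fin n) F))
    (hC : C = Submodule.span F (Set.range B))
    (hcolnd : rowSupport C = ⊤) (hrownd : colSupport C = ⊤)
    (S : Submodule F (Matrix (Fin k) (Fin m) F))
    (hS : S = Submodule.span F (Set.range (colSlices B)))
    (hfaithful : ∀ X ∈ S, X ≠ 0 → X.rank = m) :
    ((q : ℤ) - 1) *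
        (Nat.card {M : Matrix (Fin m) (Fin n) F // M ∈ C ∧ M.rank = min m n} : ℤ)
      ≥ (q : ℤ) * ((q : ℤ) ^ k - 1)
          - ((q : ℤ) ^ (k - max m n) - 1) * ((q : ℤ) ^ (min m n) - 1)
          - ((q : ℤ) ^ k - 1) := by
  subst hq hC hS
  have hsep := separatesPairs_of_faithful hcolnd hfaithful
  have hdim : Module.finrank F (Submodule.span F (Set.range B)) = k := by
    rw [finrank_span_eq_card hB, Fintype.card_fin]
  rcases le_total n m with hnm | hmn
  · have hcount := hsep.mul_card_rank_eq_card_cols_ge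
    rw [hdim, Fintype.card_fin, Fintype.card_fin, Nat.card_eq_fintype_card] at hcount
    rw [min_eq_right hnm, max_eq_left hnm]
    linarith
  · have hcount := hsep.mul_card_rank_eq_card_rows_ge
    rw [hdim, Fintype.card_fin, Fintype.card_fin, Nat.card_eq_fintype_card] at hcount
    rw [min_eq_left hmn, max_eq_right hmn]
    linarith
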